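/- arXiv:1707.02384 — 2 statements merged into one kernel-verified Lean document; each statement's English description precedes it below -/
import Mathlib

section
/- Let q ≥ 9 and k be integers with 2 ≤ k ≤ q + 1, let T be a tournament with minimum out-degree at least (q − 1)k − 1, let Ω be a collection of k − 1 pairwise vertex-disjoint q-cycles of T, and let P be a Hamiltonian path of the subtournament T ∖ Ω. Let F₁ and F₂ be disjoint vertex sets with V(F₁) ∪ V(F₂) = V(P) such that F₂ dominates F₁, and suppose q − 2 ≤ |F₁| ≤ q. Let Cᵢ ∈ Ω satisfy d⁺(F₁, Cᵢ) ≥ (q − 2/q − (|F₁| − 1)/(2q))·|F₁|, and let F ⊆ F₁ with |F| ≥ |F₁| − 1. Then d⁺(F, v) ≥ 1 for every vertex v of Cᵢ, i.e., every vertex of Cᵢ has an in-neighbour in F. -/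
open Set

/-- `T` is a tournament: irreflexive, and for distinct vertices exactly one
of the two possible arcs is present. -/
def IsTournament {V : Type*} (T : V → V → Prop) : Prop :=
  (∀ x, ¬ T x x) ∧ ∀ x y, x ≠ y → (T x y ↔ ¬ T y x)

/-- `c` is a directed cycle of length `q` in the digraph `T`. -/
def IsCycle {V : Type*} (T : V → V → Prop) (q : ℕ) (c : ZMod q → V) : Prop :=
  Function.Injective c ∧ ∀ i, T (c i) (c (i + 1))

/-- The cycles in the family `C` are pairwise vertex-disjoint. -/
def DisjointCycles {V : Type*} {k q : ℕ} (C : Fin k → ZMod q → V) : Prop :=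
  ∀ j j' : Fin k, j ≠ j' → Disjoint (Set.range (C j)) (Set.range (C j'))

/-- `T` contains `k` pairwise vertex-disjoint directed cycles of length `q`. -/
def HasDisjointCycles {V : Type*} (T : V → V → Prop) (k q : ℕ) : Prop :=
  ∃ C : Fin k → ZMod q → V, (∀ j, IsCycle T q (C j)) ∧ DisjointCycles C

/-- The out-degree of a vertex `v`. -/
noncomputable def outDeg {V : Type*} (T : V → V → Prop) (v : V) : ℕ :=
  {w | T v w}.ncard

/-- `d⁺(v, Y)`: the number of out-neighbours of `v` inside the set `Y`. -/
noncomputable def outDegTo {V : Type*} (T : V → V → Prop) (v : V) (Y : Set V) : ℕ :=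
  {w ∈ Y | T v w}.ncard

/-- `d⁺(X, v)`: the number of in-neighbours of `v` inside the set `X`. -/
noncomputable def inDegFrom {V : Type*} (T : V → V → Prop) (X : Set V) (v : V) : ℕ :=
  {x ∈ X | T x v}.ncard

/-- `d⁺(X, Y)`: the number of arcs from `X` to `Y`. -/
noncomputable def arcs {V : Type*} (T : V → V → Prop) (X Y : Set V) : ℕ :=
  {p : V × V | p.1 ∈ X ∧ p.2 ∈ Y ∧ T p.1 p.2}.ncard

/-- There is an `r`-matching from `X` to `Y`: `r` arcs from `X` to `Y` that
pairwise share no endpoints. -/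
def HasMatching {V : Type*} (T : V → V → Prop) (X Y : Set V) (r : ℕ) : Prop :=
  ∃ e : Fin r → V × V,
    (∀ i, (e i).1 ∈ X ∧ (e i).2 ∈ Y ∧ T (e i).1 (e i).2) ∧
    ∀ i j, i ≠ j → (e i).1 ≠ (e j).1 ∧ (e i).2 ≠ (e j).2

/-- `u` is a Hamiltonian path of the subtournament induced on `S`, written as
`P = (u_{l} … u₂ u₁)`: the vertex `u ⟨0,_⟩` is `u₁`, and each arc goes from the
higher-indexed vertex to the next lower-indexed one. -/
def IsHamPathOn {V : Type*} (T : V → V → Prop) (S : Set V) {l : ℕ}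
    (u : Fin l → V) : Prop :=
  Function.Injective u ∧ Set.range u = S ∧
    ∀ (i : ℕ) (h : i + 1 < l), T (u ⟨i + 1, h⟩) (u ⟨i, Nat.lt_of_succ_lt h⟩)

/-!
If a vertex `v` of the cycle had no in-neighbour in `F`, then at most one vertex of `F₁` would be an
in-neighbour of `v`. So, with `f = |F₁|`, at most `f (q - 1) + 1` arcs would go from `F₁` to the `q`
vertices of the cycle. The assumed number of arcs exceeds this by at least
`((f - 2) (q - f) + f (q - 5)) / (2 q)`, which is positive as soon as `2 ≤ f ≤ q` and `5 < q`.
-/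

section Arcs

variable {V : Type*} (T : V → V → Prop) {X Y F : Set V} {v : V}

lemma arcs_insert_le : arcs T X (insert v Y) ≤ arcs T X Y + inDegFrom T X v := by
  have arcs_eq_union : {p : V × V | p.1 ∈ X ∧ p.2 ∈ insert v Y ∧ T p.1 p.2} =
      {p : V × V | p.1 ∈ X ∧ p.2 ∈ Y ∧ T p.1 p.2} ∪ (·, v) '' {x ∈ X | T x v} := by
    ext ⟨x, y⟩
    grind
  calc arcs T X (insert v Y)
      ≤ arcs T X Y + ((·, v) '' {x ∈ X | T x v}).ncard := by
        rw [arcs, arcs_eq_union]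
        exact ncard_union_le _ _
    _ = arcs T X Y + inDegFrom T X v := by
        rw [ncard_image_of_injective _ (Prod.mk_left_injective v), inDegFrom]

lemma arcs_le_ncard_mul_ncard (hX : X.Finite) (hY : Y.Finite) :
    arcs T X Y ≤ X.ncard * Y.ncard := by
  rw [← ncard_prod]
  exact ncard_le_ncard (fun _ hp ↦ ⟨hp.1, hp.2.1⟩) (hX.prod hY)

lemma arcs_le_ncard_mul_sub_one_add_inDegFrom (hX : X.Finite) (hY : Y.Finite) (hv : v ∈ Y) :
    arcs T X Y ≤ X.ncard * (Y.ncard - 1) + inDegFrom T X v := by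
  calc arcs T X Y
      = arcs T X (insert v (Y \ {v})) := by rw [insert_sdiff_self_of_mem hv]
    _ ≤ arcs T X (Y \ {v}) + inDegFrom T X v := arcs_insert_le T
    _ ≤ X.ncard * (Y \ {v}).ncard + inDegFrom T X v := by
        gcongr
        exact arcs_le_ncard_mul_ncard T hX hY.sdiff
    _ = X.ncard * (Y.ncard - 1) + inDegFrom T X v := by rw [ncard_sdiff_singleton_of_mem hv]

lemma inDegFrom_union_le : inDegFrom T (X ∪ Y) v ≤ inDegFrom T X v + inDegFrom T Y v := by
  have sep_union_eq : {x ∈ X ∪ Y | T x v} = {x ∈ X | T x v} ∪ {x ∈ Y | T x v} := sep_union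
  rw [inDegFrom, sep_union_eq]
  exact ncard_union_le _ _

lemma inDegFrom_le_ncard (hX : X.Finite) : inDegFrom T X v ≤ X.ncard :=
  ncard_le_ncard (sep_subset _ _) hX

lemma inDegFrom_le_inDegFrom_add_ncard_sdiff (hXF : (X \ F).Finite) (hFX : F ⊆ X) :
    inDegFrom T X v ≤ inDegFrom T F v + (X \ F).ncard := by
  calc inDegFrom T X v
      = inDegFrom T (F ∪ X \ F) v := by rw [union_sdiff_cancel hFX]
    _ ≤ inDegFrom T F v + inDegFrom T (X \ F) v := inDegFrom_union_le T
    _ ≤ inDegFrom T F v + (X \ F).ncard := by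
        gcongr
        exact inDegFrom_le_ncard T hXF

end Arcs

lemma IsCycle.ncard_range {V : Type*} {T : V → V → Prop} {q : ℕ} {c : ZMod q → V}
    (hc : IsCycle T q c) : (range c).ncard = q := by
  rw [ncard_range_of_injective hc.1, Nat.card_zmod]

lemma mul_sub_one_add_one_lt_arc_threshold {q f : ℝ} (hq : 5 < q) (hf : 2 ≤ f) (hfq : f ≤ q) :
    f * (q - 1) + 1 < (q - 2 / q - (f - 1) / (2 * q)) * f := by
  have hq0 : 0 < q := by linarith
  have gap_eq : (q - 2 / q - (f - 1) / (2 * q)) * f - (f * (q - 1) + 1) =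
      ((f - 2) * (q - f) + f * (q - 5)) / (2 * q) := by
    field_simp
    ring
  have gap_pos : 0 < ((f - 2) * (q - f) + f * (q - 5)) / (2 * q) :=
    div_pos (add_pos_of_nonneg_of_pos (mul_nonneg (by linarith) (by linarith))
      (mul_pos (by linarith) (by linarith))) (mul_pos two_pos hq0)
  linarith

theorem stmt16_general {V : Type*} (T : V → V → Prop) {q : ℕ} (hq : 6 ≤ q) {X Y F : Set V}
    (hXlo : 2 ≤ X.ncard) (hXhi : X.ncard ≤ q) (hY : Y.ncard = q)
    (harcs : ((q : ℝ) - 2 / (q : ℝ) - ((X.ncard : ℝ) - 1) / (2 * (q : ℝ))) * (X.ncard : ℝ)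
        ≤ (arcs T X Y : ℝ))
    (hFX : F ⊆ X) (hF : X.ncard - 1 ≤ F.ncard) :
    ∀ v ∈ Y, 1 ≤ inDegFrom T F v := by
  intro v hv
  by_contra! hlt
  have hXfin : X.Finite := finite_of_ncard_pos (by omega)
  have hYfin : Y.Finite := finite_of_ncard_pos (by omega)
  have inDegFrom_le_one : inDegFrom T X v ≤ 1 := by
    have inDegFrom_le := inDegFrom_le_inDegFrom_add_ncard_sdiff T (v := v) hXfin.sdiff hFX
    have ncard_sdiff_add := ncard_sdiff_add_ncard_of_subset hFX hXfin
    omega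
  have arcs_le : (arcs T X Y : ℝ) ≤ X.ncard * (q - 1) + 1 := by
    have arcs_le_nat : arcs T X Y ≤ X.ncard * (q - 1) + 1 := calc
      arcs T X Y ≤ X.ncard * (q - 1) + inDegFrom T X v :=
        hY ▸ arcs_le_ncard_mul_sub_one_add_inDegFrom T hXfin hYfin hv
      _ ≤ X.ncard * (q - 1) + 1 := by gcongr
    rw [← Nat.cast_pred (by omega : 0 < q)]
    exact_mod_cast arcs_le_nat
  have lt_threshold := mul_sub_one_add_one_lt_arc_threshold (q := q) (f := X.ncard)
    (by exact_mod_cast hq) (by exact_mod_cast hXlo) (by exact_mod_cast hXhi)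
  linarith

theorem stmt16 {V : Type*} [Fintype V] (T : V → V → Prop) (hT : IsTournament T)
    (q k : ℕ) (hq : 9 ≤ q) (hk1 : 2 ≤ k) (hk2 : k ≤ q + 1)
    (hdeg : ∀ v, (q - 1) * k - 1 ≤ outDeg T v)
    (C : Fin (k - 1) → ZMod q → V) (hC : ∀ j, IsCycle T q (C j))
    (hdisj : DisjointCycles C)
    (l : ℕ) (u : Fin l → V) (hP : IsHamPathOn T ((⋃ j, Set.range (C j))ᶜ) u)
    (F₁ F₂ : Set V) (hF : Disjoint F₁ F₂) (hFU : F₁ ∪ F₂ = Set.range u)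
    (hdom : ∀ x ∈ F₂, ∀ y ∈ F₁, T x y)
    (hF1lo : q - 2 ≤ F₁.ncard) (hF1hi : F₁.ncard ≤ q)
    (i : Fin (k - 1))
    (hi : ((q : ℝ) - 2 / (q : ℝ) - ((F₁.ncard : ℝ) - 1) / (2 * (q : ℝ))) * (F₁.ncard : ℝ)
        ≤ (arcs T F₁ (Set.range (C i)) : ℝ))
    (F : Set V) (hFsub : F ⊆ F₁) (hFcard : F₁.ncard - 1 ≤ F.ncard) :
    ∀ v ∈ Set.range (C i), 1 ≤ inDegFrom T F v :=
  stmt16_general T (by omega) (by omega) hF1hi (hC i).ncard_range hi hFsub hFcard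
end

section
/- Let q ≥ 10 be an integer, let T be a tournament, and let Ω be a collection of pairwise vertex-disjoint q-cycles of T such that the subtournament T ∖ Ω contains no q-cycle. Let P = (u_l, …, u₂, u₁) be a Hamiltonian path of T ∖ Ω (so (u_{i+1}, u_i) is an arc for each i) with l ≥ 4q − 5, and set U₁ = {u₁, …, u_{q+1}} and U₂ = {u_{4q−4}, …, u_l}. If some cycle C ∈ Ω admits a q-matching from U₁ to C and a 2-matching from C to U₂, then T contains |Ω| + 1 pairwise vertex-disjoint q-cycles. -/
open Set

/-!
A subset of vertices carrying no `q`-cycle carries no longer cycle either, because a cycle of a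
tournament contains, on its own vertex set, cycles of all smaller lengths `≥ 3` (grow a triangle one
vertex at a time, as in Moon's theorem). Closing up a segment of the Hamiltonian path by an upward
arc would give such a cycle, so every arc between indices at distance at least `q - 1` points
downwards, like the arcs of the path.

The `q`-matching from `U₁` saturates `C`, so the tails `v ≠ w` of the two arcs from `C` to `U₂` have
distinct in-neighbours in `U₁`. From its out-neighbour in `U₂` each of them closes up a `q`-cycle:
jump down to a window of `q - 3` consecutive path vertices, follow it, and drop to the in-neighbour
in `U₁`. Between `U₁` and `U₂` there is room for two disjoint windows, and the two resulting cycles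
replace `C`.
-/

section Tournament

variable {V : Type*} {T : V → V → Prop}

theorem IsTournament.asymm (hT : IsTournament T) {x y : V} (h : T x y) : ¬ T y x := by
  rcases eq_or_ne x y with rfl | hne
  · exact hT.1 x
  · exact (hT.2 x y hne).1 h

theorem IsTournament.of_not (hT : IsTournament T) {x y : V} (hne : x ≠ y) (h : ¬ T y x) : T x y :=
  (hT.2 x y hne).2 h

theorem IsTournament.ne (hT : IsTournament T) {x y : V} (h : T x y) : x ≠ y := by
  rintro rfl
  exact hT.1 x h

end Tournament

section CyclicLists

variable {V : Type*} {T : V → V → Prop}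

theorem exists_eq_append_cons_cons_of_not {P : V → Prop} {l : List V} {a b : V} (ha : P a)
    (hb : b ∈ l) (hPb : ¬ P b) : ∃ s x y t, a :: l = s ++ x :: y :: t ∧ P x ∧ ¬ P y := by
  induction l generalizing a with
  | nil => simp at hb
  | cons c l ih =>
    by_cases hc : P c
    · have hbl : b ∈ l := (List.mem_cons.1 hb).resolve_left fun h => hPb (h ▸ hc)
      obtain ⟨s, x, y, t, hl, hx, hy⟩ := ih hc hbl
      exact ⟨a :: s, x, y, t, by rw [hl, List.cons_append], hx, hy⟩
    · exact ⟨[], a, c, l, rfl, ha, hc⟩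

theorem exists_eq_coe_cons_of_mem {c : Cycle V} {a : V} (ha : a ∈ c) :
    ∃ l : List V, c = ↑(a :: l) := by
  induction c using Quotient.inductionOn' with | _ m
  obtain ⟨s, t, rfl⟩ := List.append_of_mem (Cycle.mem_coe_iff.1 ha)
  exact ⟨t ++ s, Cycle.coe_eq_coe.2 List.isRotated_append⟩

theorem exists_eq_coe_cons_cons_of_not {c : Cycle V} {P : V → Prop} {a b : V} (ha : a ∈ c)
    (hPa : P a) (hb : b ∈ c) (hPb : ¬ P b) :
    ∃ (x y : V) (l : List V), c = ↑(x :: y :: l) ∧ P x ∧ ¬ P y := by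
  obtain ⟨m, rfl⟩ := exists_eq_coe_cons_of_mem ha
  have hbm : b ∈ m := (List.mem_cons.1 (Cycle.mem_coe_iff.1 hb)).resolve_left
    fun h => hPb (h ▸ hPa)
  obtain ⟨s, x, y, t, hl, hx, hy⟩ := exists_eq_append_cons_cons_of_not hPa hbm hPb
  exact ⟨x, y, t ++ s, Cycle.coe_eq_coe.2 (hl ▸ List.isRotated_append), hx, hy⟩

theorem exists_eq_coe_cons_cons_cons {c : Cycle V} (h3 : 3 ≤ c.length) :
    ∃ (a b d : V) (l : List V), c = ↑(a :: b :: d :: l) := by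
  induction c using Quotient.inductionOn' with | _ m
  match m, h3 with
  | a :: b :: d :: l, _ => exact ⟨a, b, d, l, rfl⟩

/-- A directed cycle of `T`, as a cyclic list of distinct vertices: unlike `IsCycle`, it can be
rotated and cut open without index arithmetic modulo its length. -/
structure IsDirectedCycle (T : V → V → Prop) (c : Cycle V) : Prop where
  nodup : c.Nodup
  chain : c.Chain T

theorem isDirectedCycle_coe_cons {a : V} {l : List V} :
    IsDirectedCycle T ↑(a :: l) ↔ (a :: l).Nodup ∧ List.IsChain T (a :: (l ++ [a])) :=
  ⟨fun h => ⟨h.nodup, h.chain⟩, fun h => ⟨h.1, h.2⟩⟩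

theorem exists_arc_of_not {c : Cycle V} (hc : c.Chain T) {P : V → Prop} {a b : V} (ha : a ∈ c)
    (hPa : P a) (hb : b ∈ c) (hPb : ¬ P b) : ∃ x ∈ c, ∃ y ∈ c, T x y ∧ P x ∧ ¬ P y := by
  obtain ⟨x, y, l, rfl, hx, hy⟩ := exists_eq_coe_cons_cons_of_not ha hPa hb hPb
  exact ⟨x, by simp, y, by simp, (List.isChain_cons_cons.1 hc).1, hx, hy⟩

theorem IsDirectedCycle.exists_isCycle {c : Cycle V} (hc : IsDirectedCycle T c) {q : ℕ}
    (hlen : c.length = q) (hpos : 0 < q) :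
    ∃ f : ZMod q → V, IsCycle T q f ∧ range f = {a | a ∈ c} := by
  subst hlen
  induction c with
  | nil => simp at hpos
  | cons a l =>
    obtain ⟨hnodup, hchain⟩ := isDirectedCycle_coe_cons.1 hc
    have harc : ∀ i : Fin (l.length + 1), T ((a :: l).get i) ((a :: l).get (i + 1)) := fun i => by
      have hi := List.isChain_iff_getElem.1 hchain i (by simpa using Nat.lt_succ_iff.1 i.2)
      rw [show (a :: (l ++ [a]))[(i : ℕ)]'_ = (a :: l)[i] from
        List.getElem_append_left (as := a :: l) i.2] at hi
      induction i using Fin.lastCases with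
      | last => simpa using hi
      | cast i => simpa using hi
    exact ⟨(a :: l).get, ⟨List.nodup_iff_injective_get.1 hnodup, harc⟩,
      Set.range_list_get (a :: l)⟩

theorem exists_mem_notMem_of_length_lt {c p : Cycle V} (hp : p.Nodup)
    (hlt : c.length < p.length) : ∃ v ∈ p, v ∉ c := by
  by_contra! hsub
  induction c using Quotient.inductionOn' with | _ lc
  induction p using Quotient.inductionOn' with | _ lp
  exact hlt.not_ge (hp.subperm hsub).length_le

end CyclicLists

section Moon

variable {V : Type*} {T : V → V → Prop}

theorem IsDirectedCycle.exists_triangle (hT : IsTournament T) {c : Cycle V}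
    (hc : IsDirectedCycle T c) {a : V} (ha : a ∈ c) :
    ∃ d, IsDirectedCycle T d ∧ d.length = 3 ∧ ∀ x ∈ d, x ∈ c := by
  obtain ⟨b, hb, hab⟩ : ∃ b ∈ c, T a b := by
    obtain ⟨l, rfl⟩ := exists_eq_coe_cons_of_mem ha
    cases l with
    | nil => exact ⟨a, ha, by simpa using hc.chain⟩
    | cons b l => exact ⟨b, by simp, (List.isChain_cons_cons.1 hc.chain).1⟩
  obtain ⟨x, hx, y, hy, hxy, hax, hay⟩ := exists_arc_of_not hc.chain hb hab ha (hT.1 a)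
  have hya : y ≠ a := by
    rintro rfl
    exact hT.asymm hax hxy
  refine ⟨↑[a, x, y], isDirectedCycle_coe_cons.2 ⟨?_, ?_⟩, rfl, by simp [ha, hx, hy]⟩
  · simp [hT.ne hax, hT.ne hxy, hya.symm]
  · simp [hax, hxy, hT.of_not hya hay]

theorem IsDirectedCycle.insert {x a b : V} {l : List V} (hc : IsDirectedCycle T ↑(a :: b :: l))
    (hx : x ∉ a :: b :: l) (hax : T a x) (hxb : T x b) :
    IsDirectedCycle T ↑(a :: x :: b :: l) := by
  obtain ⟨hnodup, hchain⟩ := isDirectedCycle_coe_cons.1 hc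
  refine isDirectedCycle_coe_cons.2 ⟨by grind, ?_⟩
  simp_all

theorem IsDirectedCycle.replace {x y a b d : V} {l : List V}
    (hc : IsDirectedCycle T ↑(a :: b :: d :: l)) (hx : x ∉ a :: b :: d :: l)
    (hy : y ∉ a :: b :: d :: l) (hne : x ≠ y) (hax : T a x) (hxy : T x y) (hyd : T y d) :
    IsDirectedCycle T ↑(a :: x :: y :: d :: l) := by
  obtain ⟨hnodup, hchain⟩ := isDirectedCycle_coe_cons.1 hc
  refine isDirectedCycle_coe_cons.2 ⟨by grind, ?_⟩
  simp_all

theorem IsDirectedCycle.exists_length_succ_of_mixed (hT : IsTournament T) {c : Cycle V}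
    (hc : IsDirectedCycle T c) {x : V} (hx : x ∉ c) {a b : V} (ha : a ∈ c) (hax : T a x)
    (hb : b ∈ c) (hbx : ¬ T b x) :
    ∃ d, IsDirectedCycle T d ∧ d.length = c.length + 1 ∧ ∀ v ∈ d, v ∈ c ∨ v = x := by
  obtain ⟨a, b, l, rfl, hax, hbx⟩ :=
    exists_eq_coe_cons_cons_of_not (P := fun v => T v x) ha hax hb hbx
  have hne : x ≠ b := by
    rintro rfl
    simp at hx
  refine ⟨_, hc.insert (by simpa using hx) hax (hT.of_not hne hbx), rfl, fun v hv => ?_⟩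
  simp only [Cycle.mem_coe_iff, List.mem_cons] at hv ⊢
  tauto

/-- The vertices outside `c` that receive an arc from every vertex of `c`. -/
def dominatedBy (T : V → V → Prop) (c : Cycle V) : Set V :=
  {x | x ∉ c ∧ ∀ a ∈ c, T a x}

-- Walking along `p` from a vertex dominated by `c` back into `c`, one leaves `dominatedBy T c` by
-- an arc `x → y`; the detour `a → x → y → d` then replaces `a → b → d` in `c`.
theorem IsDirectedCycle.exists_length_succ_of_pure (hT : IsTournament T) {c p : Cycle V}
    (hc : IsDirectedCycle T c) (h3 : 3 ≤ c.length) (hp : IsDirectedCycle T p)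
    (hsub : ∀ v ∈ c, v ∈ p) (hlt : c.length < p.length)
    (hpure : ∀ x ∈ p, x ∉ c → ∀ a ∈ c, T a x → ∀ b ∈ c, T b x) :
    ∃ d, IsDirectedCycle T d ∧ d.length = c.length + 1 ∧ ∀ v ∈ d, v ∈ p := by
  obtain ⟨v, hvp, hvc⟩ := exists_mem_notMem_of_length_lt hp.nodup hlt
  obtain ⟨a, b, d, l, hcdef⟩ := exists_eq_coe_cons_cons_cons h3
  have hac : a ∈ c := by simp [hcdef]
  obtain ⟨w, -, w', hw'p, hww', hwc, hw'c⟩ :=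
    exists_arc_of_not (P := (· ∈ c)) hp.chain (hsub a hac) hac hvp hvc
  obtain ⟨x, hxp, y, hyp, hxy, ⟨hxc, hax⟩, hy⟩ :=
    exists_arc_of_not (P := (· ∈ dominatedBy T c)) hp.chain hw'p
      ⟨hw'c, hpure w' hw'p hw'c w hwc hww'⟩ (hsub a hac) fun h => h.1 hac
  have hyc : y ∉ c := fun hyc => hT.asymm hxy (hax y hyc)
  have hyd : T y d := by
    refine hT.of_not (by rintro rfl; simp [hcdef] at hyc) fun hdy => hy ⟨hyc, ?_⟩
    exact hpure y hyp hyc d (by simp [hcdef]) hdy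
  subst hcdef
  refine ⟨_, hc.replace (by simpa using hxc) (by simpa using hyc) (hT.ne hxy)
    (hax a hac) hxy hyd, rfl, ?_⟩
  simp only [Cycle.mem_coe_iff, List.mem_cons] at hsub ⊢
  grind

theorem IsDirectedCycle.exists_length_succ (hT : IsTournament T) {c p : Cycle V}
    (hc : IsDirectedCycle T c) (h3 : 3 ≤ c.length) (hp : IsDirectedCycle T p)
    (hsub : ∀ v ∈ c, v ∈ p) (hlt : c.length < p.length) :
    ∃ d, IsDirectedCycle T d ∧ d.length = c.length + 1 ∧ ∀ v ∈ d, v ∈ p := by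
  by_cases hpure : ∀ x ∈ p, x ∉ c → ∀ a ∈ c, T a x → ∀ b ∈ c, T b x
  · exact hc.exists_length_succ_of_pure hT h3 hp hsub hlt hpure
  · push Not at hpure
    obtain ⟨x, hxp, hxc, a, ha, hax, b, hb, hbx⟩ := hpure
    obtain ⟨d, hd, hlen, hdc⟩ := hc.exists_length_succ_of_mixed hT hxc ha hax hb hbx
    exact ⟨d, hd, hlen, fun v hv => (hdc v hv).elim (hsub v) (by rintro rfl; exact hxp)⟩

theorem IsDirectedCycle.exists_length_eq (hT : IsTournament T) {p : Cycle V}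
    (hp : IsDirectedCycle T p) {k : ℕ} (h3 : 3 ≤ k) (hk : k ≤ p.length) :
    ∃ d, IsDirectedCycle T d ∧ d.length = k ∧ ∀ v ∈ d, v ∈ p := by
  induction k, h3 using Nat.le_induction with
  | base =>
    induction p with
    | nil => simp at hk
    | cons a l _ => exact hp.exists_triangle hT (a := a) (by simp)
  | succ k h3 ih =>
    obtain ⟨c, hc, rfl, hcp⟩ := ih (by omega)
    exact hc.exists_length_succ hT h3 hp hcp hk

end Moon

section Family

variable {V : Type*} {T : V → V → Prop} {n q : ℕ} {C : Fin n → ZMod q → V}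

theorem DisjointCycles.update (hdisj : DisjointCycles C) {j₀ : Fin n} {D : ZMod q → V}
    (hD : ∀ j ≠ j₀, Disjoint (range D) (range (C j))) :
    DisjointCycles (Function.update C j₀ D) := by
  intro i j hij
  rcases eq_or_ne i j₀ with rfl | hi
  · simpa [hij.symm] using hD j hij.symm
  · rcases eq_or_ne j j₀ with rfl | hj
    · simpa [hij] using (hD i hi).symm
    · simpa [hi, hj] using hdisj i j hij

theorem DisjointCycles.cons (hdisj : DisjointCycles C) {D : ZMod q → V}
    (hD : ∀ j, Disjoint (range D) (range (C j))) :
    DisjointCycles (Fin.cons D C : Fin (n + 1) → ZMod q → V) := by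
  intro i j hij
  induction i using Fin.cases <;> induction j using Fin.cases
  · exact absurd rfl hij
  · simpa using hD _
  · simpa using (hD _).symm
  · simpa using hdisj _ _ (by simpa using hij)

theorem DisjointCycles.disjoint_of_subset (hdisj : DisjointCycles C) {j₀ : Fin n} {D : ZMod q → V}
    (hD : range D ⊆ range (C j₀) ∪ (⋃ j, range (C j))ᶜ) {j : Fin n} (hj : j ≠ j₀) :
    Disjoint (range D) (range (C j)) :=
  Disjoint.mono_left hD <| disjoint_union_left.2 ⟨hdisj j₀ j hj.symm,
    disjoint_compl_left_iff_subset.2 (subset_iUnion (fun i => range (C i)) j)⟩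

theorem hasDisjointCycles_succ_of_replace (hC : ∀ j, IsCycle T q (C j)) (hdisj : DisjointCycles C)
    (j₀ : Fin n) {D E : ZMod q → V} (hD : IsCycle T q D) (hE : IsCycle T q E)
    (hDE : Disjoint (range D) (range E)) (hDsub : range D ⊆ range (C j₀) ∪ (⋃ j, range (C j))ᶜ)
    (hEsub : range E ⊆ range (C j₀) ∪ (⋃ j, range (C j))ᶜ) : HasDisjointCycles T (n + 1) q := by
  refine ⟨Fin.cons E (Function.update C j₀ D), fun j => ?_,
    (hdisj.update fun _ => hdisj.disjoint_of_subset hDsub).cons fun j => ?_⟩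
  · induction j using Fin.cases with
    | zero => exact hE
    | succ j =>
      rcases eq_or_ne j j₀ with rfl | hj
      · simpa using hD
      · simpa [hj] using hC j
  · rcases eq_or_ne j j₀ with rfl | hj
    · simpa using hDE.symm
    · simpa [hj] using hdisj.disjoint_of_subset hEsub hj

end Family

section Matching

variable {V : Type*} {T : V → V → Prop} {X Y : Set V}

theorem HasMatching.exists_of_ncard_eq {r : ℕ} (h : HasMatching T X Y r) (hY : Y.Finite)
    (hr : Y.ncard = r) {v w : V} (hv : v ∈ Y) (hw : w ∈ Y) (hvw : v ≠ w) :
    ∃ x ∈ X, ∃ y ∈ X, x ≠ y ∧ T x v ∧ T y w := by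
  obtain ⟨e, he, hne⟩ := h
  have hinj : Function.Injective fun i => (e i).2 := fun i j hij => by
    by_contra hij'
    exact (hne i j hij').2 hij
  have hrange : range (fun i => (e i).2) = Y := by
    refine eq_of_subset_of_ncard_le (range_subset_iff.2 fun i => (he i).2.1) ?_ hY
    rw [ncard_range_of_injective hinj, Nat.card_fin, hr]
  obtain ⟨i, rfl⟩ := hrange.symm ▸ hv
  obtain ⟨j, rfl⟩ := hrange.symm ▸ hw
  exact ⟨_, (he i).1, _, (he j).1, (hne i j fun h => hvw (h ▸ rfl)).1, (he i).2.2, (he j).2.2⟩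

theorem HasMatching.exists_two (h : HasMatching T X Y 2) :
    ∃ x ∈ X, ∃ x' ∈ X, ∃ y ∈ Y, ∃ y' ∈ Y, x ≠ x' ∧ y ≠ y' ∧ T x y ∧ T x' y' := by
  obtain ⟨e, he, hne⟩ := h
  obtain ⟨hx, hy, hxy⟩ := he 0
  obtain ⟨hx', hy', hxy'⟩ := he 1
  obtain ⟨hxx', hyy'⟩ := hne 0 1 (by decide)
  exact ⟨_, hx, _, hx', _, hy, _, hy', hxx', hyy', hxy, hxy'⟩

end Matching

section Path

variable {V : Type*} {T : V → V → Prop} {S : Set V} {q l : ℕ} {U : ℕ → V}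

/-- `IsHamPathOn` for a path indexed by `ℕ` instead of `Fin l`, which allows arithmetic on the
indices; the values of `U` from `l` on are irrelevant. -/
structure IsNatHamPathOn (T : V → V → Prop) (S : Set V) (l : ℕ) (U : ℕ → V) : Prop where
  injOn : InjOn U (Iio l)
  image_eq : U '' Iio l = S
  arc : ∀ i, i + 1 < l → T (U (i + 1)) (U i)

theorem IsHamPathOn.exists_isNatHamPathOn [Nonempty V] {u : Fin l → V} (hu : IsHamPathOn T S u) :
    ∃ U : ℕ → V, IsNatHamPathOn T S l U ∧ u = U ∘ Fin.val := by
  obtain ⟨hinj, hrange, harc⟩ := hu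
  obtain ⟨U, rfl⟩ : ∃ U : ℕ → V, u = U ∘ Fin.val :=
    ⟨Function.extend Fin.val u fun _ => Classical.arbitrary V,
      (Function.extend_comp Fin.val_injective u _).symm⟩
  refine ⟨U, ⟨?_, ?_, harc⟩, rfl⟩
  · rw [← Fin.range_val]
    exact hinj.injOn_range
  · rw [← Fin.range_val, ← range_comp, hrange]

theorem IsNatHamPathOn.mem (hU : IsNatHamPathOn T S l U) {i : ℕ} (hi : i < l) : U i ∈ S :=
  hU.image_eq ▸ mem_image_of_mem U hi

theorem IsNatHamPathOn.isDirectedCycle_segment (hU : IsNatHamPathOn T S l U) {i d : ℕ}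
    (hd : i + d < l) (hclose : T (U i) (U (i + d))) :
    IsDirectedCycle T ↑(((i + d) :: (List.range' i d).reverse).map U) := by
  have hpath : List.IsChain (fun s t => T (U t) (U s)) (List.range' i (d + 1)) := by
    refine List.isChain_iff_getElem.2 fun k hk => ?_
    simp only [List.length_range'] at hk
    simpa [add_assoc] using hU.arc (i + k) (by omega)
  rw [List.map_cons, isDirectedCycle_coe_cons]
  constructor
  · have hlt : ∀ t ∈ (i + d) :: (List.range' i d).reverse, t < l := fun t ht => by
      simp only [List.mem_cons, List.mem_reverse, List.mem_range'_1] at ht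
      omega
    rw [← List.map_cons]
    refine List.Nodup.map_on (fun s hs t ht => hU.injOn (hlt s hs) (hlt t ht)) ?_
    simp [List.nodup_range']
  · suffices List.IsChain T
        ((U (i + d) :: (List.range' i (d + 1)).map U).reverse) by
      simpa [List.range'_1_concat, List.map_reverse] using this
    rw [List.isChain_reverse]
    exact List.isChain_cons.2 ⟨by simpa [List.range'_succ] using hclose,
      (List.isChain_map U).2 hpath⟩

theorem IsNatHamPathOn.arc_of_free (hT : IsTournament T) (hq : 3 ≤ q)
    (hU : IsNatHamPathOn T S l U) (hfree : ¬ ∃ c : ZMod q → V, IsCycle T q c ∧ range c ⊆ S)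
    {i j : ℕ} (hij : i + q ≤ j + 1) (hj : j < l) : T (U j) (U i) := by
  by_contra hji
  have hne : U i ≠ U j := hU.injOn.ne (mem_Iio.2 (by omega)) hj (by omega)
  obtain ⟨d, rfl⟩ : ∃ d, j = i + d := ⟨j - i, by omega⟩
  have hcycle := hU.isDirectedCycle_segment hj (hT.of_not hne hji)
  obtain ⟨c, hc, hlen, hsub⟩ := hcycle.exists_length_eq hT hq
    (by simpa using (by omega : q ≤ d + 1))
  obtain ⟨f, hf, hrange⟩ := hc.exists_isCycle hlen (by omega)
  refine hfree ⟨f, hf, hrange.trans_subset fun v hv => ?_⟩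
  obtain ⟨t, ht, rfl⟩ := List.mem_map.1 (Cycle.mem_coe_iff.1 (hsub v hv))
  have hti : t ≤ i + d := by
    simp only [List.mem_cons, List.mem_reverse, List.mem_range'_1] at ht
    omega
  exact hU.mem (by omega)

/-- The index drops by one, as along an arc of the path, or by at least `q - 1`, as along one of
the arcs given by `IsNatHamPathOn.arc_of_free`. -/
def Drops (q i j : ℕ) : Prop := j + 1 = i ∨ j + q ≤ i + 1

theorem IsNatHamPathOn.arc_of_drops (hT : IsTournament T) (hq : 3 ≤ q)
    (hU : IsNatHamPathOn T S l U) (hfree : ¬ ∃ c : ZMod q → V, IsCycle T q c ∧ range c ⊆ S)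
    {i j : ℕ} (hij : Drops q i j) (hi : i < l) : T (U i) (U j) := by
  rcases hij with rfl | hij
  · exact hU.arc j hi
  · exact hU.arc_of_free hT hq hfree hij hi

theorem isChain_drops {x s d a : ℕ} (hxs : Drops q s x)
    (hsa : s + d + q ≤ a + 2) (hxa : x + q ≤ a + 1) :
    List.IsChain (Drops q) (a :: ((List.range' s d).reverse ++ [x])) := by
  have hrange : List.IsChain (flip (Drops q)) (List.range' s d) :=
    (List.isChain_range' s d 1).imp fun i j h => Or.inl h.symm
  suffices List.IsChain (flip (Drops q)) (x :: (List.range' s d ++ [a])) by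
    rw [show a :: ((List.range' s d).reverse ++ [x]) = (x :: (List.range' s d ++ [a])).reverse by
      simp, List.isChain_reverse]
    exact this
  cases d with
  | zero => simpa [flip, Drops] using Or.inr hxa
  | succ d =>
    refine List.isChain_cons.2 ⟨?_, List.isChain_append.2 ⟨hrange, List.isChain_singleton a, ?_⟩⟩
    · simpa [flip, List.range'_succ] using hxs
    · simpa [flip, Drops, List.range'_1_concat] using Or.inr (by omega)

theorem IsNatHamPathOn.isDirectedCycle_of_drops (hq : 2 ≤ q) (hU : IsNatHamPathOn T S l U)
    (hdrop : ∀ {i j}, Drops q i j → i < l → T (U i) (U j))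
    {v : V} (hv : v ∉ S) {a x : ℕ} {L : List ℕ} (ha : a < l)
    (hL : List.IsChain (Drops q) (a :: (L ++ [x]))) (hxv : T (U x) v) (hva : T v (U a)) :
    IsDirectedCycle T ↑(v :: (a :: (L ++ [x])).map U) := by
  have hanti : (a :: (L ++ [x])).Pairwise (· > ·) :=
    (hL.imp fun i j h => by unfold Drops at h; omega).pairwise
  have hlt : ∀ i ∈ a :: (L ++ [x]), i < l := fun i hi => by
    rcases List.mem_cons.1 hi with rfl | hi
    · exact ha
    · exact (List.rel_of_pairwise_cons hanti hi).trans ha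
  have hchain : List.IsChain (fun i j => T (U i) (U j)) (a :: (L ++ [x])) :=
    hL.imp_of_mem_imp fun i j hi _ hij => hdrop hij (hlt i hi)
  refine isDirectedCycle_coe_cons.2 ⟨List.nodup_cons.2 ⟨?_, ?_⟩, ?_⟩
  · intro hmem
    obtain ⟨i, hi, rfl⟩ := List.mem_map.1 hmem
    exact hv (hU.mem (hlt i hi))
  · exact List.Nodup.map_on (fun i hi j hj => hU.injOn (hlt i hi) (hlt j hj))
      (hanti.imp fun h => h.ne')
  · refine List.isChain_cons.2 ⟨by simpa using hva, List.isChain_append.2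
      ⟨(List.isChain_map U).2 hchain, List.isChain_singleton v, ?_⟩⟩
    simpa [List.getLast?_cons] using hxv

-- `hsa` says that the drop from `a` to the top `s + q - 4` of the window is at least `q - 1`.
theorem IsNatHamPathOn.exists_isCycle_through (hq : 3 ≤ q) (hU : IsNatHamPathOn T S l U)
    (hdrop : ∀ {i j}, Drops q i j → i < l → T (U i) (U j))
    {v : V} (hv : v ∉ S) {x s a : ℕ} (hxs : Drops q s x) (hsa : s + 2 * q ≤ a + 5)
    (ha : a < l) (hxv : T (U x) v) (hva : T v (U a)) :
    ∃ D, IsCycle T q D ∧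
      range D ⊆ insert v (U '' insert x (insert a (Ico s (s + (q - 3))))) := by
  have hxa : x + q ≤ a + 1 := by
    unfold Drops at hxs
    omega
  have hcycle := hU.isDirectedCycle_of_drops (by omega) hdrop hv ha
    (isChain_drops (d := q - 3) hxs (by omega) hxa) hxv hva
  obtain ⟨D, hD, hrange⟩ := hcycle.exists_isCycle (q := q)
    (by simpa using (by omega : q - 3 + 1 + 1 + 1 = q)) (by omega)
  refine ⟨D, hD, hrange.trans_subset fun z hz => ?_⟩
  rcases List.mem_cons.1 (Cycle.mem_coe_iff.1 hz) with rfl | hz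
  · exact mem_insert z _
  · obtain ⟨i, hi, rfl⟩ := List.mem_map.1 hz
    refine mem_insert_of_mem v (mem_image_of_mem U ?_)
    simp only [List.mem_cons, List.mem_append, List.mem_reverse, List.mem_range'_1,
      List.not_mem_nil, or_false] at hi
    simp only [mem_insert_iff, mem_Ico]
    tauto

theorem IsNatHamPathOn.exists_disjoint_isCycle_pair (hq : 3 ≤ q) (hU : IsNatHamPathOn T S l U)
    (hdrop : ∀ {i j}, Drops q i j → i < l → T (U i) (U j))
    {v w : V} (hv : v ∉ S) (hw : w ∉ S) (hvw : v ≠ w) {m x y a b : ℕ} (hx : x ≤ m) (hy : y ≤ m)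
    (hxy : x ≠ y) (hma : m + 3 * q ≤ a + 7) (hmb : m + 3 * q ≤ b + 7) (ha : a < l) (hb : b < l)
    (hab : a ≠ b) (hxv : T (U x) v) (hyw : T (U y) w) (hva : T v (U a)) (hwb : T w (U b)) :
    ∃ D E, IsCycle T q D ∧ IsCycle T q E ∧ Disjoint (range D) (range E) ∧
      range D ⊆ insert v S ∧ range E ⊆ insert w S := by
  wlog hlt : x < y generalizing v w x y a b
  · obtain ⟨D, E, hD, hE, hDE, hDv, hEw⟩ := this hw hv hvw.symm hy hx hxy.symm hmb hma hb ha
      hab.symm hyw hxv hwb hva (by omega)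
    exact ⟨E, D, hE, hD, hDE.symm, hEw, hDv⟩
  -- The two windows `[y + 1, y + q - 3]` and `[y + q - 2, y + 2 * q - 6]` are adjacent; both start
  -- above `y`, and the second is far enough above `x` because `x < y`.
  obtain ⟨D, hD, hDv⟩ := hU.exists_isCycle_through hq hdrop hv (s := y + q - 2)
    (.inr (by omega)) (by omega) ha hxv hva
  obtain ⟨E, hE, hEw⟩ := hU.exists_isCycle_through hq hdrop hw (s := y + 1)
    (.inl rfl) (by omega) hb hyw hwb
  set I := insert x (insert a (Ico (y + q - 2) (y + q - 2 + (q - 3)))) with hI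
  set J := insert y (insert b (Ico (y + 1) (y + 1 + (q - 3)))) with hJ
  have hIl : I ⊆ Iio l := by
    simp only [hI, subset_def, mem_insert_iff, mem_Ico, mem_Iio]
    omega
  have hJl : J ⊆ Iio l := by
    simp only [hJ, subset_def, mem_insert_iff, mem_Ico, mem_Iio]
    omega
  have hIJ : Disjoint I J := by
    simp only [disjoint_left, hI, hJ, mem_insert_iff, mem_Ico]
    omega
  have hIS : U '' I ⊆ S := (image_mono hIl).trans_eq hU.image_eq
  have hJS : U '' J ⊆ S := (image_mono hJl).trans_eq hU.image_eq
  refine ⟨D, E, hD, hE, Disjoint.mono hDv hEw ?_, hDv.trans (insert_subset_insert hIS),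
    hEw.trans (insert_subset_insert hJS)⟩
  rw [disjoint_insert_left, disjoint_insert_right, mem_insert_iff, not_or]
  exact ⟨⟨hvw, fun h => hv (hJS h)⟩, fun h => hw (hIS h),
    disjoint_iff_inter_eq_empty.2 <| by
      rw [← hU.injOn.image_inter hIl hJl, hIJ.inter_eq, image_empty]⟩

end Path

theorem stmt17_general {V : Type*} (T : V → V → Prop) (hT : IsTournament T)
    (q n : ℕ) (hq : 3 ≤ q)
    (C : Fin n → ZMod q → V) (hC : ∀ j, IsCycle T q (C j)) (hdisj : DisjointCycles C)
    (hfree : ¬ ∃ c : ZMod q → V, IsCycle T q c ∧ range c ⊆ (⋃ j, range (C j))ᶜ)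
    (l : ℕ) (u : Fin l → V) (hP : IsHamPathOn T ((⋃ j, range (C j))ᶜ) u) (j₀ : Fin n)
    (hm1 : HasMatching T (u '' {i : Fin l | (i : ℕ) < q + 1}) (range (C j₀)) q)
    (hm2 : HasMatching T (range (C j₀)) (u '' {i : Fin l | 4 * q - 5 ≤ (i : ℕ)}) 2) :
    HasDisjointCycles T (n + 1) q := by
  have : NeZero q := ⟨by omega⟩
  have : Nonempty V := ⟨C j₀ 0⟩
  have hcard : (range (C j₀)).ncard = q := by
    rw [ncard_range_of_injective (hC j₀).1, Nat.card_zmod]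
  have hnot : ∀ z ∈ range (C j₀), z ∉ (⋃ j, range (C j))ᶜ := fun z hz hz' =>
    hz' (mem_iUnion_of_mem j₀ hz)
  obtain ⟨U, hU, rfl⟩ := hP.exists_isNatHamPathOn
  obtain ⟨v, hv, w, hw, _, ⟨a, ha, rfl⟩, _, ⟨b, hb, rfl⟩, hvw, hab, hva, hwb⟩ := hm2.exists_two
  obtain ⟨_, ⟨x, hx, rfl⟩, _, ⟨y, hy, rfl⟩, hxy, hxv, hyw⟩ :=
    hm1.exists_of_ncard_eq (finite_range (C j₀)) hcard hv hw hvw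
  rw [mem_ofPred_eq] at ha hb hx hy
  obtain ⟨D, E, hD, hE, hDE, hDv, hEw⟩ := hU.exists_disjoint_isCycle_pair hq
    (hU.arc_of_drops hT hq hfree) (hnot v hv) (hnot w hw) hvw (m := q) (by omega) (by omega)
    (fun h => hxy (congrArg U h)) (by omega) (by omega) a.2 b.2 (fun h => hab (congrArg U h))
    hxv hyw hva hwb
  exact hasDisjointCycles_succ_of_replace hC hdisj j₀ hD hE hDE
    (hDv.trans (insert_subset (.inl hv) subset_union_right))
    (hEw.trans (insert_subset (.inl hw) subset_union_right))

theorem stmt17 {V : Type*} [Fintype V] (T : V → V → Prop) (hT : IsTournament T)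
    (q n : ℕ) (hq : 10 ≤ q)
    (C : Fin n → ZMod q → V) (hC : ∀ j, IsCycle T q (C j)) (hdisj : DisjointCycles C)
    (hfree : ¬ ∃ c : ZMod q → V, IsCycle T q c ∧
      Set.range c ⊆ (⋃ j, Set.range (C j))ᶜ)
    (l : ℕ) (hl : 4 * q - 5 ≤ l) (u : Fin l → V)
    (hP : IsHamPathOn T ((⋃ j, Set.range (C j))ᶜ) u)
    (j₀ : Fin n)
    (hm1 : HasMatching T (u '' {i : Fin l | (i : ℕ) < q + 1}) (Set.range (C j₀)) q)
    (hm2 : HasMatching T (Set.range (C j₀)) (u '' {i : Fin l | 4 * q - 5 ≤ (i : ℕ)}) 2) :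
    HasDisjointCycles T (n + 1) q :=
  stmt17_general T hT q n (by omega) C hC hdisj hfree l u hP j₀ hm1 hm2
end
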